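/- For every odd integer k ≥ 3 and every ν > 0, ψ((ν+k)/2) − ψ(ν/2) − k/ν ≤ 0, where ψ is the digamma function. -/

import Mathlib

open Real

/-- The digamma function: the derivative of `x ↦ log Γ(x)`. -/
noncomputable def digamma (x : ℝ) : ℝ :=
  deriv (fun y : ℝ => Real.log (Real.Gamma y)) x

/-!
By convexity of `log Γ`, its increment `log x` over `[x, x + 1]` lies between `ψ(x)` and
`ψ(x + 1) = ψ(x) + 1/x`, so `ψ(x + n) - log n → 0` as `n → ∞`. Hence `ψ` is the pointwise limit of
`ψ(x) - ψ(x + n) + log n = log n - ∑_{i < n} 1/(x + i)` and so is concave on `(0, ∞)`.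
For `s ≥ 1` its slope from `x` to `x + s` is therefore at most its slope from `x` to `x + 1`,
which is `1/x`.
-/

open Set Filter Topology

theorem concaveOn_of_tendsto {𝕜 E β ι : Type*} [Semiring 𝕜] [PartialOrder 𝕜]
    [AddCommMonoid E] [SMul 𝕜 E] [AddCommMonoid β] [PartialOrder β] [SMul 𝕜 β]
    [TopologicalSpace β] [OrderClosedTopology β] [ContinuousAdd β] [ContinuousConstSMul 𝕜 β]
    {l : Filter ι} [l.NeBot] {s : Set E} {F : ι → E → β} {f : E → β}
    (hF : ∀ᶠ i in l, ConcaveOn 𝕜 s (F i)) (hlim : ∀ x ∈ s, Tendsto (F · x) l (𝓝 (f x))) :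
    ConcaveOn 𝕜 s f := by
  obtain ⟨_, hs, _⟩ := hF.exists
  refine ⟨hs, fun x hx y hy a b ha hb hab ↦ ?_⟩
  exact le_of_tendsto_of_tendsto (((hlim x hx).const_smul a).add ((hlim y hy).const_smul b))
    (hlim _ (hs hx hy ha hb hab)) (hF.mono fun i hi ↦ hi.2 hx hy ha hb hab)

theorem convexOn_inv_add {𝕜 : Type*} [Field 𝕜] [LinearOrder 𝕜] [IsStrictOrderedRing 𝕜] (c : 𝕜) :
    ConvexOn 𝕜 (Ioi (-c)) fun x : 𝕜 ↦ (x + c)⁻¹ := by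
  have hinv : ConvexOn 𝕜 (Ioi 0) fun x : 𝕜 ↦ x⁻¹ := by
    simpa only [zpow_neg_one] using convexOn_zpow (𝕜 := 𝕜) (-1)
  simpa only [preimage_const_add_Ioi, zero_sub, Function.comp_def] using hinv.translate_left c

section

variable {x : ℝ}

theorem differentiableAt_log_Gamma (hx : 0 < x) :
    DifferentiableAt ℝ (fun y : ℝ ↦ log (Gamma y)) x :=
  (differentiableAt_Gamma fun m ↦ by linarith [m.cast_nonneg (α := ℝ)]).log
    (Gamma_pos_of_pos hx).ne'

theorem log_Gamma_add_one (hx : 0 < x) : log (Gamma (x + 1)) = log (Gamma x) + log x := by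
  rw [Gamma_add_one hx.ne', log_mul hx.ne' (Gamma_pos_of_pos hx).ne', add_comm]

theorem slope_log_Gamma_add_one (hx : 0 < x) :
    slope (fun y : ℝ ↦ log (Gamma y)) x (x + 1) = log x := by
  rw [slope_def_field, log_Gamma_add_one hx, add_sub_cancel_left, add_sub_cancel_left, div_one]

theorem digamma_add_one (hx : 0 < x) : digamma (x + 1) = digamma x + x⁻¹ := by
  have hshift : (fun y : ℝ ↦ log (Gamma (y + 1))) =ᶠ[𝓝 x] fun y ↦ log (Gamma y) + log y :=
    (eventually_gt_nhds hx).mono fun _ ↦ log_Gamma_add_one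
  rw [digamma, ← deriv_comp_add_const, hshift.deriv_eq,
    deriv_fun_add (differentiableAt_log_Gamma hx) (differentiableAt_log hx.ne'), deriv_log, digamma]

theorem digamma_le_log (hx : 0 < x) : digamma x ≤ log x := by
  rw [← slope_log_Gamma_add_one hx]
  exact convexOn_log_Gamma.deriv_le_slope hx (by positivity : 0 < x + 1) (lt_add_one x)
    (differentiableAt_log_Gamma hx)

theorem log_le_digamma_add_one (hx : 0 < x) : log x ≤ digamma (x + 1) := by
  have hx' : 0 < x + 1 := by positivity
  rw [← slope_log_Gamma_add_one hx]
  exact convexOn_log_Gamma.slope_le_deriv hx hx' (lt_add_one x) (differentiableAt_log_Gamma hx')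

theorem tendsto_digamma_sub_log : Tendsto (fun x ↦ digamma x - log x) atTop (𝓝 0) := by
  have hlower : ∀ᶠ x : ℝ in atTop, -x⁻¹ ≤ digamma x - log x := by
    filter_upwards [eventually_gt_atTop 0] with x hx
    linarith [log_le_digamma_add_one hx, digamma_add_one hx]
  have hupper : ∀ᶠ x : ℝ in atTop, digamma x - log x ≤ 0 := by
    filter_upwards [eventually_gt_atTop 0] with x hx
    linarith [digamma_le_log hx]
  have hinv : Tendsto (fun x : ℝ ↦ -x⁻¹) atTop (𝓝 0) := by
    simpa using (tendsto_inv_atTop_zero (𝕜 := ℝ)).neg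
  exact tendsto_of_tendsto_of_tendsto_of_le_of_le' hinv tendsto_const_nhds hlower hupper

theorem tendsto_digamma_add_sub_log (x : ℝ) :
    Tendsto (fun t ↦ digamma (x + t) - log t) atTop (𝓝 0) := by
  have hdigamma := tendsto_digamma_sub_log.comp (tendsto_atTop_add_const_left atTop x tendsto_id)
  simpa [add_comm x] using hdigamma.add (tendsto_log_comp_add_sub_log x)

theorem concaveOn_digamma_sub_digamma_add_nat (n : ℕ) :
    ConcaveOn ℝ (Ioi 0) fun x ↦ digamma x - digamma (x + n) := by
  induction n with
  | zero => simpa using concaveOn_const (0 : ℝ) (convex_Ioi (0 : ℝ))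
  | succ n ih =>
    have hinv : ConvexOn ℝ (Ioi 0) fun x : ℝ ↦ (x + n)⁻¹ :=
      (convexOn_inv_add (n : ℝ)).subset (Ioi_subset_Ioi (by simp)) (convex_Ioi 0)
    refine (ih.sub hinv).congr fun x (hx : 0 < x) ↦ ?_
    have hstep := digamma_add_one (by positivity : 0 < x + n)
    simp only [Pi.sub_apply, Nat.cast_succ, ← add_assoc, hstep]
    ring

theorem concaveOn_digamma : ConcaveOn ℝ (Ioi 0) digamma := by
  refine concaveOn_of_tendsto (l := atTop) (.of_forall fun n : ℕ ↦
    (concaveOn_digamma_sub_digamma_add_nat n).add_const (log n)) fun x _ ↦ ?_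
  have hlim := (tendsto_digamma_add_sub_log x).comp tendsto_natCast_atTop_atTop
  simpa [sub_add] using hlim.const_sub (digamma x)

theorem digamma_add_sub_digamma_le_div {s : ℝ} (hx : 0 < x) (hs : 1 ≤ s) :
    digamma (x + s) - digamma x ≤ s / x := by
  have hs₀ : 0 < s := by positivity
  have hslope : slope digamma x (x + s) ≤ slope digamma x (x + 1) :=
    concaveOn_digamma.antitoneOn_slope_gt hx ⟨(by positivity : 0 < x + 1), lt_add_one x⟩
      ⟨(by positivity : 0 < x + s), lt_add_of_pos_right x hs₀⟩ (by gcongr)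
  rw [slope_def_field, slope_def_field, digamma_add_one hx, add_sub_cancel_left,
    add_sub_cancel_left, add_sub_cancel_left, div_one, div_le_iff₀ hs₀] at hslope
  rwa [div_eq_inv_mul]

end

theorem digamma_odd_dim_nonpos_general {k ν : ℝ} (hk : 2 ≤ k) (hν : 0 < ν) :
    digamma ((ν + k) / 2) - digamma (ν / 2) - k / ν ≤ 0 := by
  have h := digamma_add_sub_digamma_le_div (half_pos hν) (by linarith : 1 ≤ k / 2)
  rw [← add_div, div_div_div_cancel_right₀ two_ne_zero] at h
  exact sub_nonpos.mpr h

/-- For every odd integer `k ≥ 3` and every `ν > 0`,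
`ψ((ν+k)/2) − ψ(ν/2) − k/ν ≤ 0`, where `ψ` is the digamma function. -/
theorem digamma_odd_dim_nonpos (k : ℕ) (hk : 3 ≤ k) (hodd : Odd k)
    (ν : ℝ) (hν : 0 < ν) :
    digamma ((ν + k) / 2) - digamma (ν / 2) - k / ν ≤ 0 :=
  digamma_odd_dim_nonpos_general (by exact_mod_cast (by lia : 2 ≤ k)) hν
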